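/- arXiv:1608.02014 — 3 statements merged into one kernel-verified Lean document; each statement's English description precedes it below -/
import Mathlib

section
/- Let M = X_0, X_1, X_2, ... be a stationary reversible Markov chain on a measurable state space S with stationary distribution π (so X_0 ~ π), and let ω : S → ℝ be a measurable label function. Then for any fixed k ∈ ℕ and any ε ∈ [0,1], the probability that ω(X_0) is an ε-outlier among ω(X_0), ω(X_1), ..., ω(X_k) is at most √(2ε). -/
open MeasureTheory ProbabilityTheory Finset
open scoped ENNReal

/-!
For `n ≥ k`, given `X n` the backward window `(X n, ..., X (n - k))` and the forward window
`(X n, ..., X (n + k))` are independent by the Markov property. Both are distributed like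
`(X 0, ..., X k)` given `X 0`, the former by reversibility and the latter because the chain is
homogeneous. If `p` is the probability in question, Jensen's inequality therefore bounds `p ^ 2`
by the probability that `ω (X n)` is an outlier in both windows. Among those `n` in `[k, 2k]` for
which this happens, one with the largest label sees all the others in its two windows, so there
are at most `2ε(k + 1)` of them. Summing over the `k + 1` values of `n` gives
`(k + 1) p ^ 2 ≤ 2ε(k + 1)`.
-/

lemma le_ofReal_sqrt_of_sq_le {p : ℝ≥0∞} {x : ℝ} (h : p ^ 2 ≤ ENNReal.ofReal x) :
    p ≤ ENNReal.ofReal √x := by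
  refine (ENNReal.pow_le_pow_left_iff two_ne_zero).1 (h.trans ?_)
  rw [← ENNReal.ofReal_pow (Real.sqrt_nonneg x), Real.sq_sqrt']
  exact ENNReal.ofReal_le_ofReal (le_max_left x 0)

section Measure

variable {Ω ι : Type*} {mΩ : MeasurableSpace Ω} {μ : Measure Ω}

lemma rpow_lintegral_le_lintegral_rpow [IsProbabilityMeasure μ] {f : Ω → ℝ≥0∞}
    (hf : AEMeasurable f μ) {p : ℝ} (hp : 1 ≤ p) :
    (∫⁻ a, f a ∂μ) ^ p ≤ ∫⁻ a, f a ^ p ∂μ := by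
  have h := eLpNorm'_le_eLpNorm'_of_exponent_le one_pos hp μ hf.aestronglyMeasurable
  simp only [eLpNorm', enorm_eq_self, ENNReal.rpow_one, one_div, inv_one] at h
  exact (ENNReal.le_rpow_inv_iff (zero_lt_one.trans_le hp)).1 h

open Classical in
lemma sum_measure_le_mul_measure_univ {s : Finset ι} {A : ι → Set Ω} {C : ℝ≥0∞}
    (hA : ∀ i ∈ s, NullMeasurableSet (A i) μ) (hC : ∀ a, (#{i ∈ s | a ∈ A i} : ℝ≥0∞) ≤ C) :
    ∑ i ∈ s, μ (A i) ≤ C * μ Set.univ := by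
  calc ∑ i ∈ s, μ (A i)
      = ∑ i ∈ s, ∫⁻ a, (A i).indicator 1 a ∂μ :=
        sum_congr rfl fun i hi => (lintegral_indicator_one₀ (hA i hi)).symm
    _ = ∫⁻ a, ∑ i ∈ s, (A i).indicator 1 a ∂μ :=
        (lintegral_finsetSum' s fun i hi => aemeasurable_one.indicator₀ (hA i hi)).symm
    _ = ∫⁻ a, (#{i ∈ s | a ∈ A i} : ℝ≥0∞) ∂μ := by
        simp only [Set.indicator_apply, Pi.one_apply, sum_boole]
    _ ≤ C * μ Set.univ := by
        rw [← lintegral_const]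
        exact lintegral_mono hC

end Measure

section HasCondDistrib

variable {Ω Ω' 𝓧 𝓨 𝓩 : Type*} {mΩ : MeasurableSpace Ω} {mΩ' : MeasurableSpace Ω'}
  {m𝓧 : MeasurableSpace 𝓧} {m𝓨 : MeasurableSpace 𝓨} {m𝓩 : MeasurableSpace 𝓩}
  {μ : Measure Ω} {ν : Measure Ω'} {X : Ω → 𝓧} {Y : Ω → 𝓨} {Z : Ω → 𝓩} {κ : Kernel 𝓧 𝓨}

lemma hasCondDistrib_deterministic [SFinite μ] (hX : AEMeasurable X μ) {f : 𝓧 → 𝓨}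
    (hf : Measurable f) : HasCondDistrib (f ∘ X) X (Kernel.deterministic f hf) μ where
  map_eq := by
    rw [Measure.compProd_deterministic hf,
      AEMeasurable.map_map_of_aemeasurable (by fun_prop) hX]
    rfl

lemma hasCondDistrib_of_identDistrib_prodMk {X' : Ω' → 𝓧} {Y' : Ω' → 𝓨}
    (h : HasCondDistrib Y X κ μ)
    (hident : IdentDistrib (fun a => (X a, Y a)) (fun a => (X' a, Y' a)) μ ν) :
    HasCondDistrib Y' X' κ ν := by
  have hX : μ.map X = ν.map X' := (hident.comp measurable_fst).map_eq
  refine ⟨hident.aemeasurable_snd, ?_⟩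
  rw [← hident.map_eq, h.map_eq, hX]

lemma hasCondDistrib_prodMk_compProd {η : Kernel (𝓧 × 𝓨) 𝓩} (hY : HasCondDistrib Y X κ μ)
    (hZ : HasCondDistrib Z (fun a => (X a, Y a)) η μ) :
    HasCondDistrib (fun a => (Y a, Z a)) X (κ ⊗ₖ η) μ where
  aemeasurable :=
    hY.aemeasurable_fst.prodMk (hY.aemeasurable_snd.prodMk hZ.aemeasurable_snd)
  map_eq := by
    rw [← Measure.compProd_assoc', ← hY.map_eq, ← hZ.map_eq,
      AEMeasurable.map_map_of_aemeasurable (by fun_prop) hZ.aemeasurable]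
    rfl

lemma hasCondDistrib_prodMk_prod {η : Kernel 𝓧 𝓩} [IsSFiniteKernel κ] [IsSFiniteKernel η]
    (hY : HasCondDistrib Y X κ μ)
    (hZ : HasCondDistrib Z (fun a => (X a, Y a)) (η.prodMkRight 𝓨) μ) :
    HasCondDistrib (fun a => (Y a, Z a)) X (κ ×ₖ η) μ := by
  have hprod : κ ×ₖ η = κ ⊗ₖ η.prodMkRight 𝓨 := by
    ext x s hs
    rw [Kernel.prod_apply' _ _ _ hs, Kernel.compProd_apply hs]
    rfl
  exact hprod ▸ hasCondDistrib_prodMk_compProd hY hZ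

lemma measure_preimage_eq_lintegral_of_hasCondDistrib [SFinite μ] [IsSFiniteKernel κ]
    (h : HasCondDistrib Y X κ μ) {A : Set 𝓨} (hA : MeasurableSet A) :
    μ (Y ⁻¹' A) = ∫⁻ x, κ x A ∂μ.map X := by
  calc μ (Y ⁻¹' A) = μ.map (fun a => (X a, Y a)) (Set.univ ×ˢ A) := by
        rw [Measure.map_apply_of_aemeasurable h.aemeasurable (MeasurableSet.univ.prod hA)]
        simp only [Set.mk_preimage_prod, Set.preimage_univ, Set.univ_inter]
    _ = ∫⁻ x, κ x A ∂μ.map X := by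
        rw [h.map_eq, Measure.compProd_apply_prod .univ hA, Measure.restrict_univ]

lemma sq_measure_preimage_le_of_hasCondDistrib_prod [IsProbabilityMeasure μ] [IsSFiniteKernel κ]
    {Y' : Ω → 𝓨} (hY : HasCondDistrib Y X κ μ)
    (hYY' : HasCondDistrib (fun a => (Y a, Y' a)) X (κ ×ₖ κ) μ)
    {A : Set 𝓨} (hA : MeasurableSet A) :
    μ (Y ⁻¹' A) ^ 2 ≤ μ (Y ⁻¹' A ∩ Y' ⁻¹' A) := by
  have := Measure.isProbabilityMeasure_map hY.aemeasurable_fst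
  calc μ (Y ⁻¹' A) ^ 2
      = (∫⁻ x, κ x A ∂μ.map X) ^ 2 := by
        rw [measure_preimage_eq_lintegral_of_hasCondDistrib hY hA]
    _ ≤ ∫⁻ x, κ x A ^ 2 ∂μ.map X := by
        simpa only [ENNReal.rpow_two] using
          rpow_lintegral_le_lintegral_rpow (κ.measurable_coe hA).aemeasurable one_le_two
    _ = ∫⁻ x, (κ ×ₖ κ) x (A ×ˢ A) ∂μ.map X := by
        simp only [Kernel.prod_apply_prod, sq]
    _ = μ (Y ⁻¹' A ∩ Y' ⁻¹' A) :=
        (measure_preimage_eq_lintegral_of_hasCondDistrib hYY' (hA.prod hA)).symm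

end HasCondDistrib

section MarkovChain

variable {Ω S : Type*} [MeasurableSpace Ω] [MeasurableSpace S]

/-- The initial path `(X 0, ..., X m)` of a process. Windows around a time `n` are initial paths
of the processes `i ↦ X (n - i)` (backward, for `m ≤ n`) and `i ↦ X (n + i)` (forward). -/
def initialPath (X : ℕ → Ω → S) (m : ℕ) (a : Ω) : Fin (m + 1) → S := fun i => X i a

/-- `X` is a time-homogeneous Markov chain with transition kernel `κ`: the conditional law of
`X (n + 1)` given `(X 0, ..., X n)` is `κ (X n)`. The law of `X 0` is arbitrary, and
`HasCondDistrib` makes the process almost everywhere measurable. -/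
def IsMarkovChain (X : ℕ → Ω → S) (κ : Kernel S S) (μ : Measure Ω) : Prop :=
  ∀ n, HasCondDistrib (X (n + 1)) (initialPath X n)
    (κ.comap (fun x => x (Fin.last n)) (measurable_pi_apply _)) μ

/-- Reversibility of a process: `(X 0, ..., X n)` and `(X n, ..., X 0)` have the same law for
every `n`. The truncated subtraction is harmless, as only indices `i ≤ n` occur. -/
def IsReversibleProcess (X : ℕ → Ω → S) (μ : Measure Ω) : Prop :=
  ∀ n, IdentDistrib (initialPath X n) (initialPath (fun i => X (n - i)) n) μ μ

lemma measurable_initialPath {X : ℕ → Ω → S} (hX : ∀ i, Measurable (X i)) (m : ℕ) :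
    Measurable (initialPath X m) :=
  measurable_pi_iff.2 fun i => hX i

lemma measurable_finSnoc {m : ℕ} : Measurable fun p : (Fin (m + 1) → S) × S =>
    (Fin.snoc p.1 p.2 : Fin (m + 2) → S) := by
  refine measurable_pi_iff.2 (Fin.lastCases ?_ fun i => ?_)
  · simpa only [Fin.snoc_last] using measurable_snd
  · simpa only [Fin.snoc_castSucc] using measurable_fst.eval

/-- The law of the first `m + 1` states of a Markov chain with transition kernel `κ`, as a kernel
in the initial state, built by appending one transition at a time. It is meaningful for s-finite
`κ` only, since `⊗ₖ` returns `0` otherwise. -/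
noncomputable def pathKernel (κ : Kernel S S) : (m : ℕ) → Kernel S (Fin (m + 1) → S)
  | 0 => Kernel.deterministic (fun s _ => s) (by fun_prop)
  | m + 1 => (pathKernel κ m ⊗ₖ κ.comap (fun p => p.2 (Fin.last m)) (by fun_prop)).map
      fun p => Fin.snoc p.1 p.2

variable {X : ℕ → Ω → S} {κ : Kernel S S} {μ : Measure Ω}

instance isSFiniteKernel_pathKernel (m : ℕ) : IsSFiniteKernel (pathKernel κ m) := by
  induction m <;> unfold pathKernel <;> infer_instance

lemma comap_pathKernel_succ [IsSFiniteKernel κ] {T : Type*} [MeasurableSpace T] {f : T → S}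
    (hf : Measurable f) (m : ℕ) :
    (pathKernel κ (m + 1)).comap f hf =
      ((pathKernel κ m).comap f hf ⊗ₖ κ.comap (fun p => p.2 (Fin.last m)) (by fun_prop)).map
        fun p => Fin.snoc p.1 p.2 := by
  rw [pathKernel, Kernel.comap_map_comm _ hf measurable_finSnoc]
  congr 1
  ext t A hA
  simp only [Kernel.comap_apply, Kernel.compProd_apply hA]

theorem IsMarkovChain.hasCondDistrib_shift_initialPath [SFinite μ] [IsSFiniteKernel κ]
    (hX : IsMarkovChain X κ μ) (n m : ℕ) :
    HasCondDistrib (initialPath (fun i => X (n + i)) m) (initialPath X n)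
      ((pathKernel κ m).comap (fun x => x (Fin.last n)) (by fun_prop)) μ := by
  induction m with
  | zero =>
    have hconst : initialPath (fun i => X (n + i)) 0 =
        (fun (x : Fin (n + 1) → S) (_ : Fin 1) => x (Fin.last n)) ∘ initialPath X n := by
      funext a i
      simp [initialPath]
    rw [hconst]
    exact hasCondDistrib_deterministic (hX n).aemeasurable_fst (by fun_prop)
  | succ m ih =>
    let pastFuture (x : Fin (n + m + 1) → S) : (Fin (n + 1) → S) × (Fin (m + 1) → S) :=
      (fun i => x ⟨i, by omega⟩, fun i => x ⟨n + i, by omega⟩)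
    have hpastFuture : Measurable pastFuture := by fun_prop
    have hnext : HasCondDistrib (X (n + m + 1))
        (fun a => (initialPath X n a, initialPath (fun i => X (n + i)) m a))
        (κ.comap (fun p => p.2 (Fin.last m)) (by fun_prop)) μ :=
      HasCondDistrib.comp_right (f := pastFuture) (Z := initialPath X (n + m)) (hf := hpastFuture)
        (hX (n + m))
    have hsnoc : initialPath (fun i => X (n + i)) (m + 1) = (fun p => Fin.snoc p.1 p.2) ∘
        fun a => (initialPath (fun i => X (n + i)) m a, X (n + m + 1) a) := by
      funext a
      refine funext (Fin.lastCases ?_ fun i => ?_)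
      · simp [initialPath, add_assoc]
      · simp [initialPath]
    rw [hsnoc, comap_pathKernel_succ]
    exact (hasCondDistrib_prodMk_compProd ih hnext).comp_left measurable_finSnoc

lemma IsMarkovChain.hasCondDistrib_initialPath [SFinite μ] [IsSFiniteKernel κ]
    (hX : IsMarkovChain X κ μ) (m : ℕ) :
    HasCondDistrib (initialPath X m) (X 0) (pathKernel κ m) μ := by
  simpa only [zero_add] using! (hX.hasCondDistrib_shift_initialPath 0 m).comp_right

lemma IsReversibleProcess.identDistrib_backward (hX : IsReversibleProcess X μ) {n m : ℕ}
    (hmn : m ≤ n) :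
    IdentDistrib (initialPath X m) (initialPath (fun i => X (n - i)) m) μ μ := by
  let restrict (x : Fin (n + 1) → S) : Fin (m + 1) → S := fun i => x ⟨i, by omega⟩
  have hrestrict : Measurable restrict := by fun_prop
  exact (hX n).comp hrestrict

lemma IsMarkovChain.hasCondDistrib_backward [SFinite μ] [IsSFiniteKernel κ]
    (hX : IsMarkovChain X κ μ) (hrev : IsReversibleProcess X μ) {n m : ℕ} (hmn : m ≤ n) :
    HasCondDistrib (initialPath (fun i => X (n - i)) m) (X n) (pathKernel κ m) μ :=
  hasCondDistrib_of_identDistrib_prodMk (hX.hasCondDistrib_initialPath m)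
    ((hrev.identDistrib_backward hmn).comp (u := fun x => (x 0, x)) (by fun_prop))

theorem IsMarkovChain.hasCondDistrib_backward_forward [SFinite μ] [IsSFiniteKernel κ]
    (hX : IsMarkovChain X κ μ) (hrev : IsReversibleProcess X μ) {n m : ℕ} (hmn : m ≤ n) :
    HasCondDistrib
      (fun a => (initialPath (fun i => X (n - i)) m a, initialPath (fun i => X (n + i)) m a))
      (X n) (pathKernel κ m ×ₖ pathKernel κ m) μ := by
  let lastBack (x : Fin (n + 1) → S) : S × (Fin (m + 1) → S) :=
    (x (Fin.last n), fun i => x ⟨n - i, by omega⟩)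
  have hlastBack : Measurable lastBack := by fun_prop
  exact hasCondDistrib_prodMk_prod (hX.hasCondDistrib_backward hrev hmn) <|
    HasCondDistrib.comp_right (f := lastBack) (Z := initialPath X n) (hf := hlastBack)
      (hX.hasCondDistrib_shift_initialPath n m)

theorem IsMarkovChain.sq_measure_initialPath_preimage_le [IsProbabilityMeasure μ]
    [IsSFiniteKernel κ] (hX : IsMarkovChain X κ μ) (hrev : IsReversibleProcess X μ) {n m : ℕ}
    (hmn : m ≤ n) {A : Set (Fin (m + 1) → S)} (hA : MeasurableSet A) :
    μ (initialPath X m ⁻¹' A) ^ 2 ≤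
      μ (initialPath (fun i => X (n - i)) m ⁻¹' A ∩ initialPath (fun i => X (n + i)) m ⁻¹' A) := by
  rw [(hrev.identDistrib_backward hmn).measure_mem_eq hA]
  exact sq_measure_preimage_le_of_hasCondDistrib_prod
    (hX.hasCondDistrib_backward hrev hmn) (hX.hasCondDistrib_backward_forward hrev hmn) hA

open Classical in
theorem IsMarkovChain.mul_sq_measure_initialPath_preimage_le [IsProbabilityMeasure μ]
    [IsSFiniteKernel κ] (hX : IsMarkovChain X κ μ) (hrev : IsReversibleProcess X μ) {k : ℕ}
    {A : Set (Fin (k + 1) → S)} (hA : MeasurableSet A) {C : ℝ≥0∞}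
    (hC : ∀ u : ℕ → S, (#{n ∈ Icc k (k + k) |
      (fun i : Fin (k + 1) => u (n - i)) ∈ A ∧ (fun i : Fin (k + 1) => u (n + i)) ∈ A} : ℝ≥0∞)
        ≤ C) :
    (k + 1) * μ (initialPath X k ⁻¹' A) ^ 2 ≤ C := by
  let twoSided (n : ℕ) : Set Ω :=
    initialPath (fun i => X (n - i)) k ⁻¹' A ∩ initialPath (fun i => X (n + i)) k ⁻¹' A
  have htwoSided : ∀ n ∈ Icc k (k + k), NullMeasurableSet (twoSided n) μ := by
    intro n hn
    have hpair := (hX.hasCondDistrib_backward_forward hrev (mem_Icc.1 hn).1).aemeasurable_snd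
    exact (hpair.fst.nullMeasurableSet_preimage hA).inter
      (hpair.snd.nullMeasurableSet_preimage hA)
  calc (k + 1) * μ (initialPath X k ⁻¹' A) ^ 2
      = ∑ _n ∈ Icc k (k + k), μ (initialPath X k ⁻¹' A) ^ 2 := by simp [add_assoc]
    _ ≤ ∑ n ∈ Icc k (k + k), μ (twoSided n) := sum_le_sum fun _ hn =>
        hX.sq_measure_initialPath_preimage_le hrev (mem_Icc.1 hn).1 hA
    _ ≤ C * μ Set.univ :=
        sum_measure_le_mul_measure_univ htwoSided fun a => by
          convert hC fun i => X i a
          rfl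
    _ = C := by rw [measure_univ, mul_one]

end MarkovChain

section Outlier

variable {α : Type*} [LinearOrder α] {ε : ℝ} {k : ℕ}

/-- The first entry `x 0` is an `ε`-outlier among `x 0, ..., x k`: at most `ε (k + 1)` of the
entries, itself included, are `≤ x 0`. -/
def IsOutlier (ε : ℝ) (x : Fin (k + 1) → α) : Prop :=
  (#{i | x i ≤ x 0} : ℝ) ≤ ε * (k + 1)

lemma isOutlier_iff_card_range (u : ℕ → α) :
    IsOutlier ε (fun i : Fin (k + 1) => u i) ↔
      (#{i ∈ range (k + 1) | u i ≤ u 0} : ℝ) ≤ ε * (k + 1) := by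
  have hcard : #{i : Fin (k + 1) | u i ≤ u 0} = #{i ∈ range (k + 1) | u i ≤ u 0} := by
    simp only [card_filter, Fin.sum_univ_eq_sum_range fun i => if u i ≤ u 0 then 1 else 0]
  rw [← hcard]
  rfl

lemma measurableSet_isOutlier [TopologicalSpace α] [OrderClosedTopology α]
    [SecondCountableTopology α] [MeasurableSpace α] [OpensMeasurableSpace α] :
    MeasurableSet {x : Fin (k + 1) → α | IsOutlier ε x} := by
  simp only [IsOutlier, card_filter, Nat.cast_sum, Nat.cast_ite]
  exact measurableSet_le (Finset.measurable_sum _ fun i _ => Measurable.ite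
    (measurableSet_le (measurable_pi_apply i) (measurable_pi_apply 0))
    measurable_const measurable_const) measurable_const

lemma exists_card_le_card_backward_add_card_forward (w : ℕ → α) {m : ℕ} {T : Finset ℕ}
    (hT : T ⊆ Icc m (m + k)) (hne : T.Nonempty) :
    ∃ n ∈ T, #T ≤
      #{i : Fin (k + 1) | w (n - i) ≤ w n} + #{i : Fin (k + 1) | w (n + i) ≤ w n} := by
  obtain ⟨n, hn, hmax⟩ := T.exists_max_image w hne
  have hcover : T ⊆
      image (fun i : Fin (k + 1) => n - i) {i | w (n - i) ≤ w n} ∪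
      image (fun i : Fin (k + 1) => n + i) {i | w (n + i) ≤ w n} := by
    intro j hj
    have hnIcc := mem_Icc.1 (hT hn)
    have hjIcc := mem_Icc.1 (hT hj)
    rcases le_total j n with hjn | hnj
    · have hsub : n - (n - j) = j := Nat.sub_sub_self hjn
      refine mem_union_left _ (mem_image.2 ⟨⟨n - j, by omega⟩, ?_, hsub⟩)
      simpa only [mem_filter_univ, hsub] using hmax j hj
    · have hadd : n + (j - n) = j := Nat.add_sub_cancel' hnj
      refine mem_union_right _ (mem_image.2 ⟨⟨j - n, by omega⟩, ?_, hadd⟩)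
      simpa only [mem_filter_univ, hadd] using hmax j hj
  exact ⟨n, hn, (card_le_card hcover).trans <| (card_union_le _ _).trans <|
    add_le_add card_image_le card_image_le⟩

lemma card_le_of_isOutlier_backward_forward (hε : 0 ≤ ε) (w : ℕ → α) {m : ℕ} {T : Finset ℕ}
    (hT : T ⊆ Icc m (m + k))
    (hback : ∀ n ∈ T, IsOutlier ε fun i : Fin (k + 1) => w (n - i))
    (hforw : ∀ n ∈ T, IsOutlier ε fun i : Fin (k + 1) => w (n + i)) :
    (#T : ℝ) ≤ 2 * ε * (k + 1) := by
  rcases T.eq_empty_or_nonempty with rfl | hne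
  · rw [card_empty, Nat.cast_zero]
    positivity
  obtain ⟨n, hn, hcard⟩ := exists_card_le_card_backward_add_card_forward w hT hne
  calc (#T : ℝ)
      ≤ #{i : Fin (k + 1) | w (n - i) ≤ w n} + #{i : Fin (k + 1) | w (n + i) ≤ w n} :=
        mod_cast hcard
    _ ≤ ε * (k + 1) + ε * (k + 1) := add_le_add (hback n hn) (hforw n hn)
    _ = 2 * ε * (k + 1) := by ring

theorem sqrt_eps_test_general {Ω S : Type*} [MeasurableSpace Ω] [MeasurableSpace S]
    {μ : Measure Ω} [IsProbabilityMeasure μ] {X : ℕ → Ω → S} {κ : Kernel S S} [IsSFiniteKernel κ]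
    [TopologicalSpace α] [OrderClosedTopology α] [SecondCountableTopology α]
    [MeasurableSpace α] [OpensMeasurableSpace α]
    (hX : IsMarkovChain X κ μ) (hrev : IsReversibleProcess X μ) {ω : S → α} (hω : Measurable ω)
    (k : ℕ) (hε : 0 ≤ ε) :
    μ {a | IsOutlier ε fun i : Fin (k + 1) => ω (X i a)} ≤ ENNReal.ofReal √(2 * ε) := by
  classical
  let A : Set (Fin (k + 1) → S) := {x | IsOutlier ε fun i => ω (x i)}
  have hA : MeasurableSet A := measurableSet_isOutlier.preimage (by fun_prop)
  have hmul : (k + 1) * μ (initialPath X k ⁻¹' A) ^ 2 ≤ ENNReal.ofReal (2 * ε * (k + 1)) := by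
    refine hX.mul_sq_measure_initialPath_preimage_le hrev hA fun u => ?_
    rw [← ENNReal.ofReal_natCast]
    exact ENNReal.ofReal_le_ofReal <|
      card_le_of_isOutlier_backward_forward hε (fun i => ω (u i)) (filter_subset _ _)
        (fun n hn => (mem_filter.1 hn).2.1) (fun n hn => (mem_filter.1 hn).2.2)
  have hfactor : ENNReal.ofReal (2 * ε * (k + 1)) = (k + 1) * ENNReal.ofReal (2 * ε) := by
    rw [mul_comm, ENNReal.ofReal_mul (by positivity)]
    norm_cast
  rw [hfactor] at hmul
  exact le_ofReal_sqrt_of_sq_le <|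
    (ENNReal.mul_le_mul_iff_right (by simp) (by finiteness)).1 hmul

end Outlier

/-- Let `X 0, X 1, X 2, ...` be a stationary reversible Markov chain on a
measurable state space `S` (with Markov transition kernel `κ`) having stationary distribution
`π` (so `X 0 ~ π`), and let `ω : S → ℝ` be a measurable label function.  Then for any fixed
`k : ℕ` and any `ε ∈ [0,1]`, the probability that `ω (X 0)` is an `ε`-outlier among
`ω (X 0), ω (X 1), ..., ω (X k)` — i.e. that there are at most `ε * (k+1)` indices
`i ∈ {0,...,k}` with `ω (X i) ≤ ω (X 0)` — is at most `√(2ε)`.  Reversibility is formulated as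
in the paper: for every `k`, the joint distribution of `(X 0, ..., X k)` equals the joint
distribution of `(X k, ..., X 0)`. -/
theorem sqrt_eps_test
    {Ω S : Type*} [MeasurableSpace Ω] [MeasurableSpace S]
    (μ : Measure Ω) [IsProbabilityMeasure μ]
    (X : ℕ → Ω → S) (hXmeas : ∀ i, Measurable (X i))
    (κ : Kernel S S) [IsMarkovKernel κ]
    (π : Measure S) [IsProbabilityMeasure π]
    -- `X 0 ~ π`
    (hX0 : Measure.map (X 0) μ = π)
    -- `π` is stationary for the kernel `κ`
    (hstat : π.bind (fun s => κ s) = π)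
    -- Markov property: the law of `((X 0, ..., X n), X (n+1))` is the law of `(X 0, ..., X n)`
    -- composed with the kernel `κ` applied to the last coordinate
    (hMarkov : ∀ n : ℕ,
      Measure.map (fun a => ((fun i : Fin (n + 1) => X i a), X (n + 1) a)) μ
        = (Measure.map (fun a => fun i : Fin (n + 1) => X i a) μ)
            ⊗ₘ (κ.comap (fun s : Fin (n + 1) → S => s (Fin.last n)) (measurable_pi_apply _)))
    -- reversibility: `(X 0, ..., X k)` has the same joint law as `(X k, ..., X 0)`
    (hrev : ∀ k : ℕ,
      Measure.map (fun a => fun i : Fin (k + 1) => X (i : ℕ) a) μ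
        = Measure.map (fun a => fun i : Fin (k + 1) => X (k - (i : ℕ)) a) μ)
    (ω : S → ℝ) (hω : Measurable ω)
    (k : ℕ) (ε : ℝ) (hε0 : 0 ≤ ε) (hε1 : ε ≤ 1) :
    μ {a | (((Finset.range (k + 1)).filter (fun i => ω (X i a) ≤ ω (X 0 a))).card : ℝ)
        ≤ ε * (k + 1)}
      ≤ ENNReal.ofReal (Real.sqrt (2 * ε)) := by
  have hX : IsMarkovChain X κ μ := fun n =>
    ⟨((measurable_initialPath hXmeas n).prodMk (hXmeas (n + 1))).aemeasurable, hMarkov n⟩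
  have hreversible : IsReversibleProcess X μ := fun n =>
    ⟨(measurable_initialPath hXmeas n).aemeasurable,
      (measurable_initialPath (fun i => hXmeas (n - i)) n).aemeasurable, hrev n⟩
  have houtlier (a : Ω) := isOutlier_iff_card_range (ε := ε) (k := k) fun i => ω (X i a)
  simpa only [houtlier] using sqrt_eps_test_general hX hreversible hω k hε0
end

section
/- Let M = X_0, X_1, X_2, ... be a time-homogeneous Markov chain on a measurable state space S with transition kernel κ, let π be a stationary distribution for κ with respect to which κ is reversible, and let ω : S → ℝ be a measurable label function. If the total variation distance between the distribution of X_0 and π is at most ε_1, then for any fixed k ∈ ℕ and any ε ∈ [0,1], the probability that ω(X_0) is an ε-outlier among ω(X_0), ω(X_1), ..., ω(X_k) is at most √(2ε) + ε_1. -/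
open MeasureTheory ProbabilityTheory Finset
open scoped ENNReal

/-!
Let `f s` be the probability that the chain started at `s` has an `ε`-outlier at time `0`. By
reversibility, the two-sided path whose state at time `0` has law `π`, and whose past and future are
independent chains given that state, is shift invariant. Now `∫ f² dπ` is the probability that time
`0` is an outlier with respect to both the `k` steps before and the `k` steps after it, and by
invariance the same holds at each of the times `0, …, k`. On every single path at most
`2 ε (k + 1)` of these `k + 1` times qualify, so `∫ f² dπ ≤ 2 ε` and `∫ f dπ ≤ √(2 ε)` by
Cauchy–Schwarz. As `0 ≤ f ≤ 1`, replacing `π` by the law of `X 0` costs at most the total variation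
distance.
-/

namespace SqrtEpsTest

section Outlier

variable {α : Type*} [LinearOrder α] {ε : ℝ} {k : ℕ}

/-- `a 0` is an `ε`-outlier among `a 0, …, a k`. -/
def IsOutlier (ε : ℝ) (k : ℕ) (a : ℕ → α) : Prop :=
  (#{i ∈ range (k + 1) | a i ≤ a 0} : ℝ) ≤ ε * (k + 1)

/-- `a 0` is an `ε`-outlier both among `a 0, a (-1), …, a (-k)` and among `a 0, a 1, …, a k`. -/
def IsTwoSidedOutlier (ε : ℝ) (k : ℕ) (a : ℤ → α) : Prop :=
  IsOutlier ε k (fun i : ℕ => a (-i)) ∧ IsOutlier ε k (fun i : ℕ => a i)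

open Classical in
lemma card_isTwoSidedOutlier_le (hε : 0 ≤ ε) (a : ℤ → α) :
    (#((range (k + 1)).filter fun j : ℕ => IsTwoSidedOutlier ε k fun i => a (i + j)) : ℝ) ≤
      2 * (ε * (k + 1)) := by
  set J := (range (k + 1)).filter fun j : ℕ => IsTwoSidedOutlier ε k fun i => a (i + j)
  rcases J.eq_empty_or_nonempty with hJ | hJ
  · rw [hJ, card_empty, Nat.cast_zero]
    positivity
  -- The time of `J` with the largest label has all the others in its own two windows.
  obtain ⟨m, hm, hmax⟩ := J.exists_max_image (fun j : ℕ => a j) hJ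
  obtain ⟨hmk, hpast, hfuture⟩ := mem_filter.1 hm
  simp only [IsOutlier, Nat.cast_zero, neg_zero, zero_add] at hpast hfuture
  set past := (range (k + 1)).filter fun i : ℕ => a (-i + m) ≤ a m
  set future := (range (k + 1)).filter fun i : ℕ => a (i + m) ≤ a m
  have hcover : J ⊆ past.image (m - ·) ∪ future.image (m + ·) := by
    intro j hj
    have hjk := mem_range.1 (mem_filter.1 hj).1
    have hle : a j ≤ a m := hmax j hj
    rw [mem_range] at hmk
    rcases le_total j m with hjm | hmj
    · refine mem_union_left _ (mem_image.2 ⟨m - j, mem_filter.2 ⟨mem_range.2 (by omega), ?_⟩,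
        by omega⟩)
      rwa [Nat.cast_sub hjm, neg_sub, sub_add_cancel]
    · refine mem_union_right _ (mem_image.2 ⟨j - m, mem_filter.2 ⟨mem_range.2 (by omega), ?_⟩,
        by omega⟩)
      rwa [Nat.cast_sub hmj, sub_add_cancel]
  have hcard : #J ≤ #past + #future :=
    (card_le_card hcover).trans <| (card_union_le _ _).trans <|
      add_le_add card_image_le card_image_le
  calc (#J : ℝ) ≤ #past + #future := mod_cast hcard
    _ ≤ 2 * (ε * (k + 1)) := by linarith

lemma measurableSet_isOutlier {S : Type*} [MeasurableSpace S] {ω : S → α}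
    (hω : MeasurableSet {p : S × S | ω p.1 ≤ ω p.2}) :
    MeasurableSet {z : ℕ → S | IsOutlier ε k (fun i => ω (z i))} := by
  have hle (i : ℕ) : MeasurableSet {z : ℕ → S | ω (z i) ≤ ω (z 0)} :=
    (show Measurable fun z : ℕ → S => (z i, z 0) by fun_prop) hω
  have hcount : Measurable fun z : ℕ → S =>
      ((#{i ∈ range (k + 1) | ω (z i) ≤ ω (z 0)} : ℕ) : ℝ) := by
    simp only [card_filter]
    exact measurable_from_top.comp <| Finset.measurable_sum _ fun i _ =>
      Measurable.ite (hle i) measurable_const measurable_const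
  exact measurableSet_le hcount measurable_const

end Outlier

section Measure

variable {Ω : Type*} [MeasurableSpace Ω] {μ ν π : Measure Ω}

open Classical in
lemma nat_mul_measure_le_of_card_le {T : Ω → Ω} (hT : MeasurePreserving T μ μ) {B : Set Ω}
    (hB : MeasurableSet B) {n : ℕ} {c : ℝ≥0∞}
    (hcard : ∀ w, (#{j ∈ range n | T^[j] w ∈ B} : ℝ≥0∞) ≤ c) : n * μ B ≤ c * μ Set.univ := by
  have hmeas (j : ℕ) : MeasurableSet (T^[j] ⁻¹' B) := (hT.iterate j).measurable hB
  calc n * μ B = ∑ j ∈ range n, μ (T^[j] ⁻¹' B) := by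
        simp_rw [(hT.iterate _).measure_preimage hB.nullMeasurableSet, sum_const, card_range,
          nsmul_eq_mul]
    _ = ∫⁻ w, ∑ j ∈ range n, (T^[j] ⁻¹' B).indicator 1 w ∂μ := by
        simp_rw [lintegral_finsetSum _ fun j _ => measurable_one.indicator (hmeas j),
          lintegral_indicator_one (hmeas _)]
    _ ≤ ∫⁻ _, c ∂μ := lintegral_mono fun w => by
        simpa only [Set.indicator_apply, Set.mem_preimage, Pi.one_apply, sum_boole] using hcard w
    _ = c * μ Set.univ := lintegral_const c

lemma sq_lintegral_le {f : Ω → ℝ≥0∞} (hf : AEMeasurable f μ) :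
    (∫⁻ x, f x ∂μ) ^ 2 ≤ (∫⁻ x, f x ^ 2 ∂μ) * μ Set.univ := by
  have h := ENNReal.lintegral_mul_le_Lp_mul_Lq μ Real.HolderConjugate.two_two hf
    (aemeasurable_const (b := (1 : ℝ≥0∞)))
  simp only [Pi.mul_apply, mul_one, ENNReal.rpow_two, one_pow, lintegral_one] at h
  calc (∫⁻ x, f x ∂μ) ^ 2
      ≤ ((∫⁻ x, f x ^ 2 ∂μ) ^ (1 / 2 : ℝ) * μ Set.univ ^ (1 / 2 : ℝ)) ^ 2 := by gcongr
    _ = (∫⁻ x, f x ^ 2 ∂μ) * μ Set.univ := by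
        rw [mul_pow, ← ENNReal.rpow_natCast, ← ENNReal.rpow_natCast, ← ENNReal.rpow_mul,
          ← ENNReal.rpow_mul]
        norm_num

lemma lintegral_le_lintegral_add_of_measure_le_add [IsFiniteMeasure ν] [IsFiniteMeasure π]
    {c : ℝ≥0∞} (h : ∀ E, MeasurableSet E → ν E ≤ π E + c) {f : Ω → ℝ≥0∞}
    (hf1 : ∀ x, f x ≤ 1) : ∫⁻ x, f x ∂ν ≤ ∫⁻ x, f x ∂π + c := by
  obtain ⟨A, hA⟩ := exists_isHahnDecomposition ν π
  have hle : π.restrict Aᶜ ≤ ν.restrict Aᶜ := hA.ge_on_compl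
  have hexcess : (ν.restrict Aᶜ - π.restrict Aᶜ) Set.univ ≤ c := by
    rw [Measure.sub_apply .univ hle, tsub_le_iff_left]
    simpa using h Aᶜ hA.measurableSet.compl
  calc ∫⁻ x, f x ∂ν = ∫⁻ x in A, f x ∂ν + ∫⁻ x in Aᶜ, f x ∂ν :=
        (lintegral_add_compl f hA.measurableSet).symm
    _ = ∫⁻ x in A, f x ∂ν +
          (∫⁻ x, f x ∂(ν.restrict Aᶜ - π.restrict Aᶜ) + ∫⁻ x in Aᶜ, f x ∂π) := by
        rw [← lintegral_add_measure f (ν.restrict Aᶜ - _), Measure.sub_add_cancel_of_le hle]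
    _ ≤ ∫⁻ x in A, f x ∂π + (c + ∫⁻ x in Aᶜ, f x ∂π) := by
        refine add_le_add (lintegral_mono' hA.le_on le_rfl) (add_le_add_left ?_ _)
        exact (lintegral_mono hf1).trans (by simpa using hexcess)
    _ = ∫⁻ x, f x ∂π + c := by
        rw [← lintegral_add_compl f hA.measurableSet (μ := π)]
        ring

lemma measure_le_add_ofReal_of_abs_sub_le [IsFiniteMeasure ν] [IsFiniteMeasure π] {c : ℝ}
    {E : Set Ω} (h : |(ν E).toReal - (π E).toReal| ≤ c) :
    ν E ≤ π E + ENNReal.ofReal c := by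
  rw [← ENNReal.ofReal_toReal (measure_ne_top ν E), ← ENNReal.ofReal_toReal (measure_ne_top π E),
    ← ENNReal.ofReal_add ENNReal.toReal_nonneg ((abs_nonneg _).trans h)]
  exact ENNReal.ofReal_le_ofReal (by linarith [le_abs_self ((ν E).toReal - (π E).toReal)])

end Measure

section Reversible

variable {S T T' : Type*} [MeasurableSpace S] [MeasurableSpace T] [MeasurableSpace T']
  {κ : Kernel S S} [IsSFiniteKernel κ] {π : Measure S} [SFinite π]

lemma parallelComp_comp_compProd (ξ : Kernel S T) [IsSFiniteKernel ξ] (η : Kernel S T')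
    [IsSFiniteKernel η] : (ξ ∥ₖ η) ∘ₘ (π ⊗ₘ κ) = (ξ ×ₖ (η ∘ₖ κ)) ∘ₘ π := by
  rw [Measure.compProd_eq_comp_prod, Measure.comp_assoc, Kernel.parallelComp_comp_prod,
    Kernel.comp_id]

lemma comp_prod_comp_eq_prod_comp_comp (hrev : (π ⊗ₘ κ).map Prod.swap = π ⊗ₘ κ)
    (ξ : Kernel S T) [IsSFiniteKernel ξ] (η : Kernel S T') [IsSFiniteKernel η] :
    ((ξ ∘ₖ κ) ×ₖ η) ∘ₘ π = (ξ ×ₖ (η ∘ₖ κ)) ∘ₘ π := by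
  calc ((ξ ∘ₖ κ) ×ₖ η) ∘ₘ π = Kernel.swap T' T ∘ₘ (η ×ₖ (ξ ∘ₖ κ)) ∘ₘ π := by
        rw [Measure.comp_assoc, Kernel.swap_prod]
    _ = Kernel.swap T' T ∘ₘ (η ∥ₖ ξ) ∘ₘ (π ⊗ₘ κ) := by rw [parallelComp_comp_compProd]
    _ = (ξ ∥ₖ η) ∘ₘ (π ⊗ₘ κ).map Prod.swap := by
        rw [Measure.comp_assoc, Kernel.swap_parallelComp, ← Measure.comp_assoc, Measure.swap_comp]
    _ = (ξ ×ₖ (η ∘ₖ κ)) ∘ₘ π := by rw [hrev, parallelComp_comp_compProd]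

end Reversible

variable {Ω Ω' S : Type*} [MeasurableSpace Ω] [MeasurableSpace Ω'] [MeasurableSpace S]

/-- `X 0, X 1, …` is a time-homogeneous Markov chain under `μ` with transition kernel `κ`: for
every `n`, drawing `X (n + 1)` means applying `κ` to the last entry of the history
`(X 0, …, X n)`. -/
def IsMarkovChain (κ : Kernel S S) (X : ℕ → Ω → S) (μ : Measure Ω) : Prop :=
  ∀ n : ℕ, μ.map (fun a => (fun i : Fin (n + 1) => X i a, X (n + 1) a)) =
    μ.map (fun a => fun i : Fin (n + 1) => X i a) ⊗ₘ
      κ.comap (fun h : Fin (n + 1) → S => h (Fin.last n)) (measurable_pi_apply _)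

lemma map_prodMk_eq_compProd_of_comap {H H' : Type*} [MeasurableSpace H] [MeasurableSpace H']
    {μ : Measure Ω} [SFinite μ] {η : Kernel H' S} [IsSFiniteKernel η] {f : H → H'}
    (hf : Measurable f) {h : Ω → H} (hh : Measurable h) {Y : Ω → S} (hY : Measurable Y)
    (hcond : μ.map (fun a => (h a, Y a)) = μ.map h ⊗ₘ η.comap f hf) :
    μ.map (fun a => (f (h a), Y a)) = μ.map (fun a => f (h a)) ⊗ₘ η := by
  have hcomp : (μ.map h ⊗ₘ η.comap f hf).map (Prod.map f id) = (μ.map h).map f ⊗ₘ η := by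
    ext E hE
    rw [Measure.map_apply (by fun_prop) hE,
      Measure.compProd_apply (hE.preimage (by fun_prop)), Measure.compProd_apply hE,
      lintegral_map (Kernel.measurable_kernel_prodMk_left hE) hf]
    rfl
  rw [← hcond, Measure.map_map (by fun_prop) (by fun_prop), Measure.map_map hf hh] at hcomp
  exact hcomp

namespace IsMarkovChain

variable {κ : Kernel S S} {X : ℕ → Ω → S} {μ : Measure Ω}

lemma shift [IsSFiniteKernel κ] [SFinite μ] (hX : ∀ i, Measurable (X i))
    (h : IsMarkovChain κ X μ) : IsMarkovChain κ (fun i => X (i + 1)) μ := fun n =>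
  map_prodMk_eq_compProd_of_comap (h := fun a (i : Fin (n + 2)) => X i a)
    (f := fun g (i : Fin (n + 1)) => g i.succ) (by fun_prop) (by fun_prop) (hX _) (h (n + 1))

lemma map_prefix_eq {X' : ℕ → Ω' → S} {μ' : Measure Ω'}
    (hX : ∀ i, Measurable (X i)) (hX' : ∀ i, Measurable (X' i))
    (h : IsMarkovChain κ X μ) (h' : IsMarkovChain κ X' μ') (h0 : μ.map (X 0) = μ'.map (X' 0))
    (n : ℕ) : μ.map (fun a (i : Fin (n + 1)) => X i a) =
      μ'.map (fun a (i : Fin (n + 1)) => X' i a) := by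
  induction n with
  | zero =>
    have hconst : Measurable fun (s : S) (_ : Fin 1) => s := by fun_prop
    have heq := congrArg (Measure.map fun (s : S) (_ : Fin 1) => s) h0
    rw [Measure.map_map hconst (hX 0), Measure.map_map hconst (hX' 0)] at heq
    convert heq using 2 <;> ext a i <;> rw [Fin.fin_one_eq_zero i] <;> rfl
  | succ n ih =>
    let snoc : (Fin (n + 1) → S) × S → Fin (n + 2) → S := fun p => Fin.snoc p.1 p.2
    have hsnoc : Measurable snoc := measurable_pi_iff.2 fun i => by
      induction i using Fin.lastCases with
      | last => simpa [snoc] using measurable_snd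
      | cast i => simpa [snoc] using by fun_prop
    have heq := congrArg (Measure.map snoc) ((h n).trans <| ih ▸ (h' n).symm)
    rw [Measure.map_map hsnoc (by fun_prop), Measure.map_map hsnoc (by fun_prop)] at heq
    convert heq using 2 <;> ext a i <;> induction i using Fin.lastCases <;> simp [snoc]

end IsMarkovChain

lemma measure_ext_of_prefix {ρ ρ' : Measure (ℕ → S)} [IsFiniteMeasure ρ']
    (h : ∀ n, ρ.map (fun z (i : Fin (n + 1)) => z i) = ρ'.map (fun z (i : Fin (n + 1)) => z i)) :
    ρ = ρ' := by
  refine IsProjectiveLimit.unique (P := fun I => ρ'.map I.restrict) (fun I => ?_) (fun I => rfl)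
  obtain ⟨n, hn⟩ := I.bddAbove
  let f : (Fin (n + 1) → S) → I → S := fun g i => g ⟨i, Nat.lt_succ_of_le (hn i.2)⟩
  have hmap := congrArg (Measure.map f) (h n)
  rw [Measure.map_map (by fun_prop) (by fun_prop),
    Measure.map_map (by fun_prop) (by fun_prop)] at hmap
  exact hmap

/-- The kernel that draws the next state from a history `s 0, …, s n` by applying `κ` to `s n`. The
histories are indexed by `Iic n` to fit `Kernel.traj`. -/
noncomputable abbrev historyKernel (κ : Kernel S S) (n : ℕ) : Kernel (Iic n → S) S :=
  κ.comap (fun h => h ⟨n, mem_Iic.2 le_rfl⟩) (by fun_prop)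

/-- The law of the path `X 0, X 1, …` of the Markov chain with transition kernel `κ`, as a function
of the starting point `X 0`. -/
noncomputable def pathKernel (κ : Kernel S S) [IsMarkovKernel κ] : Kernel S (ℕ → S) :=
  (Kernel.traj (X := fun _ => S) (historyKernel κ) 0).comap (fun s _ => s) (by fun_prop)

variable (κ : Kernel S S) [IsMarkovKernel κ]

instance : IsMarkovKernel (pathKernel κ) := by
  unfold pathKernel
  infer_instance

lemma pathKernel_comp_eq_trajMeasure (ν : Measure S) :
    pathKernel κ ∘ₘ ν = Kernel.trajMeasure (X := fun _ => S) ν (historyKernel κ) := by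
  rw [pathKernel, ← Kernel.comp_deterministic_eq_comap, ← Measure.comp_assoc,
    Measure.deterministic_comp_eq_map]
  rfl

lemma isMarkovChain_pathKernel_comp (ν : Measure S) [IsProbabilityMeasure ν] :
    IsMarkovChain κ (fun i (z : ℕ → S) => z i) (pathKernel κ ∘ₘ ν) := fun n => by
  rw [pathKernel_comp_eq_trajMeasure]
  exact map_prodMk_eq_compProd_of_comap (h := Preorder.frestrictLe (π := fun _ => S) n)
    (f := fun (h : Iic n → S) (i : Fin (n + 1)) => h ⟨i, mem_Iic.2 (Nat.lt_succ_iff.1 i.2)⟩)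
    (by fun_prop) (by fun_prop) (by fun_prop)
    Kernel.map_frestrictLe_trajMeasure_compProd_eq_map_trajMeasure.symm

/-- The path that starts at `s` and continues along `z`. -/
def pathCons (s : S) (z : ℕ → S) : ℕ → S
  | 0 => s
  | n + 1 => z n

@[fun_prop]
lemma measurable_pathCons (s : S) : Measurable (pathCons s) :=
  measurable_pi_iff.2 fun n => by cases n <;> simp only [pathCons] <;> fun_prop

lemma pathKernel_map_pathCons_tail (s : S) :
    (pathKernel κ s).map (fun z => pathCons s fun i => z (i + 1)) = pathKernel κ s := by
  have hupdate (z : ℕ → S) :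
      (Function.updateFinset z (Iic 0) fun _ => s) = pathCons s fun i => z (i + 1) := by
    ext i
    cases i <;> simp [Function.updateFinset, pathCons]
  simp_rw [← hupdate, pathKernel, Kernel.comap_apply]
  exact Kernel.traj_map_updateFinset (X := fun _ => S) (κ := historyKernel κ) (n := 0) fun _ => s

lemma pathKernel_map_zero : (pathKernel κ).map (fun z => z 0) = Kernel.id := by
  ext s : 1
  rw [Kernel.map_apply _ (by fun_prop), ← pathKernel_map_pathCons_tail,
    Measure.map_map (by fun_prop) (by fun_prop), Kernel.id_apply]
  exact (Measure.map_const _ s).trans (by simp)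

lemma pathKernel_map_one : (pathKernel κ).map (fun z => z 1) = κ := by
  ext s : 1
  rw [Kernel.map_apply _ (by fun_prop)]
  have hstep := Kernel.map_traj_succ_self (X := fun _ => S) (κ := historyKernel κ) (a := 0)
  rw [pathKernel, Kernel.comap_apply, ← Kernel.map_apply _ (by fun_prop)]
  exact DFunLike.congr_fun hstep fun _ => s

lemma pathKernel_comp_map_zero (ν : Measure S) :
    (pathKernel κ ∘ₘ ν).map (fun z => z 0) = ν := by
  rw [Measure.map_comp _ _ (by fun_prop), pathKernel_map_zero, Measure.id_comp]

variable {κ} in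
lemma IsMarkovChain.map_path_eq {X : ℕ → Ω → S} {μ : Measure Ω} [IsProbabilityMeasure μ]
    (hX : ∀ i, Measurable (X i)) (h : IsMarkovChain κ X μ) :
    μ.map (fun a i => X i a) = pathKernel κ ∘ₘ μ.map (X 0) := by
  have := Measure.isProbabilityMeasure_map (hX 0).aemeasurable (μ := μ)
  refine measure_ext_of_prefix fun n => ?_
  rw [Measure.map_map (by fun_prop) (by fun_prop)]
  exact h.map_prefix_eq hX measurable_pi_apply (isMarkovChain_pathKernel_comp κ _)
    (pathKernel_comp_map_zero κ _).symm n

lemma pathKernel_map_tail :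
    (pathKernel κ).map (fun z i => z (i + 1)) = pathKernel κ ∘ₖ κ := by
  ext s : 1
  have hchain := isMarkovChain_pathKernel_comp κ (Measure.dirac s)
  rw [Measure.dirac_bind (pathKernel κ).measurable] at hchain
  rw [Kernel.map_apply _ (by fun_prop), Kernel.comp_apply,
    (hchain.shift measurable_pi_apply).map_path_eq fun i => measurable_pi_apply (i + 1), zero_add,
    ← Kernel.map_apply _ (measurable_pi_apply 1), pathKernel_map_one]

lemma pathKernel_apply_eq_map_pathCons (s : S) :
    pathKernel κ s = ((pathKernel κ ∘ₖ κ) s).map (pathCons s) := by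
  rw [← pathKernel_map_tail, Kernel.map_apply _ (by fun_prop),
    Measure.map_map (by fun_prop) (by fun_prop)]
  exact (pathKernel_map_pathCons_tail κ s).symm

/-- The two-sided path with future `z 0, z 1, …` and past `…, y 1, y 0` (so that `y 0` is at time
`-1`). -/
def twoSided (p : (ℕ → S) × (ℕ → S)) : ℤ → S
  | .ofNat n => p.2 n
  | .negSucc n => p.1 n

@[fun_prop]
lemma measurable_twoSided : Measurable (twoSided (S := S)) :=
  measurable_pi_iff.2 fun i => by cases i <;> simp only [twoSided] <;> fun_prop

/-- The left shift of two-sided paths. -/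
def shift (w : ℤ → S) : ℤ → S := fun i => w (i + 1)

@[fun_prop]
lemma measurable_shift : Measurable (shift (S := S)) := by
  unfold shift
  fun_prop

lemma shift_iterate_apply {S : Type*} (n : ℕ) (w : ℤ → S) (i : ℤ) :
    shift^[n] w i = w (i + n) := by
  induction n generalizing w with
  | zero => simp
  | succ n ih => rw [Function.iterate_succ_apply, ih, shift, Nat.cast_succ, add_assoc]

lemma shift_twoSided_pathCons {S : Type*} (s : S) (y z : ℕ → S) :
    shift (twoSided (y, pathCons s z)) = twoSided (pathCons s y, z) := by
  ext i
  rcases i with n | _ | n <;> rfl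

/-- The law of the two-sided path of the chain in equilibrium: the state at time `0` has law `π`,
and given this state `s` the future and the past are independent chains started at `s`. -/
noncomputable def equilibriumLaw (π : Measure S) : Measure (ℤ → S) :=
  (((pathKernel κ ∘ₖ κ) ×ₖ pathKernel κ) ∘ₘ π).map twoSided

instance (π : Measure S) [IsProbabilityMeasure π] : IsProbabilityMeasure (equilibriumLaw κ π) :=
  Measure.isProbabilityMeasure_map (by fun_prop)

lemma prod_pathKernel_apply (s : S) : ((pathKernel κ ∘ₖ κ) ×ₖ pathKernel κ) s =
    ((pathKernel κ ∘ₖ κ) s |>.prod ((pathKernel κ ∘ₖ κ) s)).map (Prod.map id (pathCons s)) := by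
  rw [Kernel.prod_apply, pathKernel_apply_eq_map_pathCons,
    ← Measure.map_prod_map _ _ measurable_id (by fun_prop), Measure.map_id]

lemma pathKernel_prod_apply (s : S) : (pathKernel κ ×ₖ (pathKernel κ ∘ₖ κ)) s =
    ((pathKernel κ ∘ₖ κ) s |>.prod ((pathKernel κ ∘ₖ κ) s)).map (Prod.map (pathCons s) id) := by
  rw [Kernel.prod_apply, pathKernel_apply_eq_map_pathCons,
    ← Measure.map_prod_map _ _ (by fun_prop) measurable_id, Measure.map_id]

lemma pathKernel_prod_pathKernel_apply (s : S) : (pathKernel κ ×ₖ pathKernel κ) s =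
    ((pathKernel κ ∘ₖ κ) s |>.prod ((pathKernel κ ∘ₖ κ) s)).map
      (Prod.map (pathCons s) (pathCons s)) := by
  rw [Kernel.prod_apply, pathKernel_apply_eq_map_pathCons,
    Measure.map_prod_map _ _ (by fun_prop) (by fun_prop)]

lemma measurePreserving_shift_equilibriumLaw {π : Measure S} [SFinite π]
    (hrev : (π ⊗ₘ κ).map Prod.swap = π ⊗ₘ κ) :
    MeasurePreserving shift (equilibriumLaw κ π) (equilibriumLaw κ π) := by
  refine ⟨measurable_shift, ?_⟩
  have hkernel : ((pathKernel κ ∘ₖ κ) ×ₖ pathKernel κ).map (shift ∘ twoSided) =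
      (pathKernel κ ×ₖ (pathKernel κ ∘ₖ κ)).map twoSided := by
    ext s : 1
    rw [Kernel.map_apply _ (by fun_prop), Kernel.map_apply _ (by fun_prop), prod_pathKernel_apply,
      pathKernel_prod_apply, Measure.map_map (by fun_prop) (by fun_prop),
      Measure.map_map (by fun_prop) (by fun_prop)]
    congr 1
    ext p : 1
    exact shift_twoSided_pathCons s p.1 p.2
  rw [equilibriumLaw, Measure.map_map (by fun_prop) (by fun_prop),
    Measure.map_comp _ _ (by fun_prop), hkernel, ← Measure.map_comp _ _ (by fun_prop),
    comp_prod_comp_eq_prod_comp_comp hrev]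

lemma map_past_future_equilibriumLaw (π : Measure S) :
    (equilibriumLaw κ π).map (fun w => (fun i : ℕ => w (-i), fun i : ℕ => w i)) =
      (pathKernel κ ×ₖ pathKernel κ) ∘ₘ π := by
  have hkernel : ((pathKernel κ ∘ₖ κ) ×ₖ pathKernel κ).map
      ((fun w : ℤ → S => (fun i : ℕ => w (-i), fun i : ℕ => w i)) ∘ twoSided) =
      pathKernel κ ×ₖ pathKernel κ := by
    ext s : 1
    rw [Kernel.map_apply _ (by fun_prop), prod_pathKernel_apply, pathKernel_prod_pathKernel_apply,
      Measure.map_map (by fun_prop) (by fun_prop)]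
    congr 1
    ext p i
    · cases i <;> rfl
    · rfl
  rw [equilibriumLaw, Measure.map_map (by fun_prop) (by fun_prop),
    Measure.map_comp _ _ (by fun_prop), hkernel]

lemma equilibriumLaw_past_future (π : Measure S) {A B : Set (ℕ → S)} (hA : MeasurableSet A)
    (hB : MeasurableSet B) :
    equilibriumLaw κ π {w | (fun i : ℕ => w (-i)) ∈ A ∧ (fun i : ℕ => w i) ∈ B} =
      ∫⁻ s, pathKernel κ s A * pathKernel κ s B ∂π := by
  have h := congrArg (· (A ×ˢ B)) (map_past_future_equilibriumLaw κ π)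
  simp only [Measure.map_apply (show Measurable fun w : ℤ → S =>
    (fun i : ℕ => w (-i), fun i : ℕ => w i) by fun_prop) (hA.prod hB),
    Measure.bind_apply (hA.prod hB) (Kernel.aemeasurable _), Kernel.prod_apply_prod] at h
  exact h

section OutlierProbability

variable {α : Type*} [LinearOrder α] {ω : S → α} {ε : ℝ} {k : ℕ} {π : Measure S}
  [IsProbabilityMeasure π]

variable {κ}

lemma lintegral_sq_pathKernel_isOutlier_le (hrev : (π ⊗ₘ κ).map Prod.swap = π ⊗ₘ κ)
    (hω : MeasurableSet {p : S × S | ω p.1 ≤ ω p.2}) (hε : 0 ≤ ε) :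
    ∫⁻ s, pathKernel κ s {z | IsOutlier ε k fun i => ω (z i)} ^ 2 ∂π ≤ ENNReal.ofReal (2 * ε) := by
  classical
  set O := {z : ℕ → S | IsOutlier ε k fun i => ω (z i)}
  set B := {w : ℤ → S | IsTwoSidedOutlier ε k fun i => ω (w i)}
  have hO : MeasurableSet O := measurableSet_isOutlier hω
  have hB : MeasurableSet B :=
    (show Measurable fun (w : ℤ → S) (i : ℕ) => w (-i) by fun_prop) hO |>.inter <|
      (show Measurable fun (w : ℤ → S) (i : ℕ) => w i by fun_prop) hO
  have hcard (w : ℤ → S) : (#{j ∈ range (k + 1) | shift^[j] w ∈ B} : ℝ≥0∞) ≤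
      ENNReal.ofReal (2 * (ε * (k + 1))) := by
    simp only [B, Set.mem_ofPred_eq, shift_iterate_apply]
    rw [← ENNReal.ofReal_natCast]
    exact ENNReal.ofReal_le_ofReal (card_isTwoSidedOutlier_le hε fun i => ω (w i))
  have hmul : (k + 1 : ℕ) * equilibriumLaw κ π B ≤ (k + 1 : ℕ) * ENNReal.ofReal (2 * ε) := by
    calc (k + 1 : ℕ) * equilibriumLaw κ π B ≤ ENNReal.ofReal (2 * (ε * (k + 1))) := by
          simpa only [measure_univ, mul_one] using
            nat_mul_measure_le_of_card_le (measurePreserving_shift_equilibriumLaw κ hrev) hB hcard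
      _ = (k + 1 : ℕ) * ENNReal.ofReal (2 * ε) := by
          rw [← ENNReal.ofReal_natCast, ← ENNReal.ofReal_mul (by positivity)]
          push_cast
          ring_nf
  calc ∫⁻ s, pathKernel κ s O ^ 2 ∂π = equilibriumLaw κ π B := by
        simp_rw [sq]
        exact (equilibriumLaw_past_future κ π hO hO).symm
    _ ≤ ENNReal.ofReal (2 * ε) :=
        (ENNReal.mul_le_mul_iff_right (by simp) (ENNReal.natCast_ne_top _)).1 hmul

lemma lintegral_pathKernel_isOutlier_le (hrev : (π ⊗ₘ κ).map Prod.swap = π ⊗ₘ κ)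
    (hω : MeasurableSet {p : S × S | ω p.1 ≤ ω p.2}) (hε : 0 ≤ ε) :
    ∫⁻ s, pathKernel κ s {z | IsOutlier ε k fun i => ω (z i)} ∂π ≤ ENNReal.ofReal √(2 * ε) := by
  rw [← ENNReal.pow_le_pow_left_iff two_ne_zero, ← ENNReal.ofReal_pow (Real.sqrt_nonneg _),
    Real.sq_sqrt (by positivity)]
  have hsq := sq_lintegral_le (μ := π)
    ((pathKernel κ).measurable_coe (measurableSet_isOutlier (ε := ε) (k := k) hω)).aemeasurable
  rw [measure_univ, mul_one] at hsq
  exact hsq.trans (lintegral_sq_pathKernel_isOutlier_le hrev hω hε)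

end OutlierProbability

variable {κ} in
lemma IsMarkovChain.measure_mem_eq_lintegral {X : ℕ → Ω → S} {μ : Measure Ω}
    [IsProbabilityMeasure μ] (hX : ∀ i, Measurable (X i)) (h : IsMarkovChain κ X μ)
    {A : Set (ℕ → S)} (hA : MeasurableSet A) :
    μ {a | (fun i => X i a) ∈ A} = ∫⁻ s, pathKernel κ s A ∂(μ.map (X 0)) := by
  rw [← Measure.bind_apply hA (pathKernel κ).aemeasurable, ← h.map_path_eq hX,
    Measure.map_apply (by fun_prop) hA]
  rfl

end SqrtEpsTest

open SqrtEpsTest in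
theorem sqrt_eps_test_of_totalVariation_general {Ω S α : Type*} [MeasurableSpace Ω]
    [MeasurableSpace S] [LinearOrder α] {μ : Measure Ω} [IsProbabilityMeasure μ]
    {X : ℕ → Ω → S} (hX : ∀ i, Measurable (X i)) {κ : Kernel S S} [IsMarkovKernel κ]
    {π : Measure S} [IsProbabilityMeasure π] (hrev : (π ⊗ₘ κ).map Prod.swap = π ⊗ₘ κ)
    (hMarkov : IsMarkovChain κ X μ) {ε₁ : ℝ}
    (htv : ∀ E, MeasurableSet E → |(μ.map (X 0) E).toReal - (π E).toReal| ≤ ε₁)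
    {ω : S → α} (hω : MeasurableSet {p : S × S | ω p.1 ≤ ω p.2}) (k : ℕ) {ε : ℝ} (hε : 0 ≤ ε) :
    μ {a | IsOutlier ε k fun i => ω (X i a)} ≤ ENNReal.ofReal (√(2 * ε) + ε₁) := by
  set O := {z : ℕ → S | IsOutlier ε k fun i => ω (z i)}
  have hε₁ : 0 ≤ ε₁ := (abs_nonneg _).trans (htv ∅ .empty)
  calc μ {a | (fun i => X i a) ∈ O} = ∫⁻ s, pathKernel κ s O ∂(μ.map (X 0)) :=
        hMarkov.measure_mem_eq_lintegral hX (measurableSet_isOutlier hω)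
    _ ≤ ∫⁻ s, pathKernel κ s O ∂π + ENNReal.ofReal ε₁ :=
        lintegral_le_lintegral_add_of_measure_le_add
          (fun E hE => measure_le_add_ofReal_of_abs_sub_le (htv E hE)) fun _ => prob_le_one
    _ ≤ ENNReal.ofReal √(2 * ε) + ENNReal.ofReal ε₁ := by
        gcongr
        exact lintegral_pathKernel_isOutlier_le hrev hω hε
    _ = ENNReal.ofReal (√(2 * ε) + ε₁) := (ENNReal.ofReal_add (Real.sqrt_nonneg _) hε₁).symm

/-- Let `X 0, X 1, ...` be a time-homogeneous Markov chain on a measurable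
state space `S` with transition kernel `κ`, let `π` be a stationary distribution for `κ` with
respect to which `κ` is reversible (i.e. the measure `π(dx) κ(x, dy)` on `S × S` is invariant
under swapping the coordinates).  If the total variation distance between the distribution of
`X 0` and `π` is at most `ε₁` (i.e. `|ℙ(X 0 ∈ E) − π E| ≤ ε₁` for every measurable `E`), then
for any fixed `k` and any `ε ∈ [0,1]`, the probability that `ω (X 0)` is an `ε`-outlier among
`ω (X 0), ..., ω (X k)` is at most `√(2ε) + ε₁`. -/
theorem sqrt_eps_test_of_totalVariation
    {Ω S : Type*} [MeasurableSpace Ω] [MeasurableSpace S]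
    (μ : Measure Ω) [IsProbabilityMeasure μ]
    (X : ℕ → Ω → S) (hXmeas : ∀ i, Measurable (X i))
    (κ : Kernel S S) [IsMarkovKernel κ]
    (π : Measure S) [IsProbabilityMeasure π]
    -- `π` is stationary for the kernel `κ`
    (hstat : π.bind (fun s => κ s) = π)
    -- `κ` is reversible with respect to `π`: the measure `π(dx) κ(x,dy)` is swap-invariant
    (hrev : (π ⊗ₘ κ).map Prod.swap = π ⊗ₘ κ)
    -- Markov property: the law of `((X 0, ..., X n), X (n+1))` is the law of `(X 0, ..., X n)`
    -- composed with the kernel `κ` applied to the last coordinate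
    (hMarkov : ∀ n : ℕ,
      Measure.map (fun a => ((fun i : Fin (n + 1) => X i a), X (n + 1) a)) μ
        = (Measure.map (fun a => fun i : Fin (n + 1) => X i a) μ)
            ⊗ₘ (κ.comap (fun s : Fin (n + 1) → S => s (Fin.last n)) (measurable_pi_apply _)))
    -- the total variation distance between the distribution of `X 0` and `π` is at most `ε₁`
    (ε₁ : ℝ)
    (htv : ∀ E : Set S, MeasurableSet E →
      |(Measure.map (X 0) μ E).toReal - (π E).toReal| ≤ ε₁)
    (ω : S → ℝ) (hω : Measurable ω)
    (k : ℕ) (ε : ℝ) (hε0 : 0 ≤ ε) (hε1 : ε ≤ 1) :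
    μ {a | (((Finset.range (k + 1)).filter (fun i => ω (X i a) ≤ ω (X 0 a))).card : ℝ)
        ≤ ε * (k + 1)}
      ≤ ENNReal.ofReal (Real.sqrt (2 * ε) + ε₁) :=
  sqrt_eps_test_of_totalVariation_general hXmeas hrev hMarkov htv
    (measurableSet_le (hω.comp measurable_fst) (hω.comp measurable_snd)) k hε0
end

section
/- Let X_0, X_1, ... be a stationary reversible Markov chain on a countable state space S with reversible stationary distribution π, X_0 ~ π, and label function ω : S → ℝ. For j, ℓ, k ∈ ℕ with j ≤ k, let ρ_{j,ℓ}^k(σ) denote the conditional probability, given X_j = σ, that X_j is ℓ-small among X_0, ..., X_k (defined whenever π(σ) > 0). Then for every σ with π(σ) > 0 and every j ≤ k, ρ_{j,2ℓ}^k(σ) ≥ (ρ_{0,ℓ}^k(σ))^2. -/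
open MeasureTheory Finset
open scoped ENNReal

/-- `X j` is `ℓ`-small among `X 0, ..., X k` (at the sample point `a`): there are at most `ℓ`
indices `i ≠ j` in `{0, ..., k}` with `ω (X i a) ≤ ω (X j a)`. -/
def IsSmallAt {Ω S : Type*} (X : ℕ → Ω → S) (ω : S → ℝ) (j ℓ k : ℕ) (a : Ω) : Prop :=
  ((Finset.range (k + 1)).filter (fun i => i ≠ j ∧ ω (X i a) ≤ ω (X j a))).card ≤ ℓ

/-- `ρ_{j,ℓ}^k(σ)`: the conditional probability, given `X j = σ`, that `X j` is `ℓ`-small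
among `X 0, ..., X k`. -/
noncomputable def rho {Ω S : Type*} [MeasurableSpace Ω] (μ : Measure Ω)
    (X : ℕ → Ω → S) (ω : S → ℝ) (j ℓ k : ℕ) (σ : S) : ℝ≥0∞ :=
  μ {a | X j a = σ ∧ IsSmallAt X ω j ℓ k a} / μ {a | X j a = σ}

/-!
Fix the present `X j = σ`. By the Markov property the past and the future of `j` are independent,
and by detailed balance the past read backwards from `j` is again a path of the chain started at
`σ`. If at most `ℓ` states among the `j` past ones and at most `ℓ'` among the `m` future ones have
label at most `ω σ`, then `X j` is `(ℓ + ℓ')`-small among `X 0, ..., X (j + m)`. Hence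
`ρ_{0,ℓ}^j ρ_{0,ℓ'}^m ≤ ρ_{j,ℓ+ℓ'}^{j+m}`, and `ρ_{0,ℓ}^k` only grows when `k` is decreased.
-/

/-- Since `f` is not assumed measurable, its law need not be additive; that the atoms exhaust the
total mass is what makes it so. -/
theorem measure_preimage_eq_tsum {Ω T : Type*} [MeasurableSpace Ω] [Countable T] {μ : Measure Ω}
    [IsFiniteMeasure μ] {f : Ω → T} (hf : ∑' t, μ (f ⁻¹' {t}) ≤ μ Set.univ) (A : Set T) :
    μ (f ⁻¹' A) = ∑' t : A, μ (f ⁻¹' {(t : T)}) := by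
  have upper (B : Set T) : μ (f ⁻¹' B) ≤ ∑' t : B, μ (f ⁻¹' {(t : T)}) := by
    rw [← Set.biUnion_preimage_singleton]
    exact measure_biUnion_le μ B.to_countable _
  have split : ∑' t : A, μ (f ⁻¹' {(t : T)}) + ∑' t : ↑Aᶜ, μ (f ⁻¹' {(t : T)}) =
      ∑' t, μ (f ⁻¹' {t}) :=
    ENNReal.summable.tsum_add_tsum_compl (f := fun t => μ (f ⁻¹' {t})) ENNReal.summable
  have compl_ne_top : ∑' t : ↑Aᶜ, μ (f ⁻¹' {(t : T)}) ≠ ∞ :=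
    ne_top_of_le_ne_top (measure_ne_top μ Set.univ) ((le_add_self.trans_eq split).trans hf)
  refine le_antisymm (upper A) ((ENNReal.add_le_add_iff_right compl_ne_top).1 ?_)
  calc ∑' t : A, μ (f ⁻¹' {(t : T)}) + ∑' t : ↑Aᶜ, μ (f ⁻¹' {(t : T)})
      ≤ μ Set.univ := split.trans_le hf
    _ ≤ μ (f ⁻¹' A) + μ (f ⁻¹' Aᶜ) := by
        rw [← Set.union_compl_self (f ⁻¹' A)]
        exact measure_union_le _ _
    _ ≤ μ (f ⁻¹' A) + ∑' t : ↑Aᶜ, μ (f ⁻¹' {(t : T)}) := by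
        gcongr
        exact upper Aᶜ

theorem tsum_setProd_mul {α β : Type*} (f : α → ℝ≥0∞) (g : β → ℝ≥0∞) (A : Set α)
    (B : Set β) :
    ∑' t : ↑(A ×ˢ B), f t.1.1 * g t.1.2 = (∑' y : A, f y) * ∑' z : B, g z := by
  rw [← (Equiv.Set.prod A B).symm.tsum_eq, ENNReal.tsum_prod', ← ENNReal.tsum_mul_right]
  refine tsum_congr fun y => ?_
  rw [← ENNReal.tsum_mul_left]
  rfl

theorem card_filter_ne_range (j m : ℕ) (p : ℕ → Prop) [DecidablePred p] :
    #{i ∈ range (j + m + 1) | i ≠ j ∧ p i} =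
      #{i : Fin j | p i.rev} + #{i : Fin m | p (j + (i + 1))} := by
  have past : #{i : Fin j | p i.rev} = ∑ i ∈ range j, if i ≠ j ∧ p i then 1 else 0 := by
    rw [card_filter, ← Fin.sum_univ_eq_sum_range (fun i => if i ≠ j ∧ p i then 1 else 0),
      ← Equiv.sum_comp Fin.revPerm]
    refine sum_congr rfl fun i _ => ?_
    simp only [Fin.revPerm_apply, Fin.rev_rev, ne_eq, i.is_lt.ne, not_false_eq_true, true_and]
  have future : #{i : Fin m | p (j + (i + 1))} =
      ∑ i ∈ range m, if j + (i + 1) ≠ j ∧ p (j + (i + 1)) then 1 else 0 := by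
    rw [card_filter, Fin.sum_univ_eq_sum_range fun i => if p (j + (i + 1)) then 1 else 0]
    simp
  rw [card_filter, past, future, add_assoc, sum_range_add, sum_range_succ']
  simp

section PathWeight

variable {S : Type*} {P : S → S → ℝ≥0∞}

/-- The probability that the first `n` steps of the chain with transition matrix `P` started at `s`
are `y 0, ..., y (n - 1)`; the starting state is not part of the path `y`. -/
noncomputable def pathWeight (P : S → S → ℝ≥0∞) {n : ℕ} (s : S) (y : Fin n → S) : ℝ≥0∞ :=
  ∏ i, P ((Fin.cons s y : Fin (n + 1) → S) i.castSucc) (y i)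

theorem pathWeight_cons {n : ℕ} (s t : S) (y : Fin n → S) :
    pathWeight P s (Fin.cons t y : Fin (n + 1) → S) = P s t * pathWeight P t y := by
  simp [pathWeight, Fin.prod_univ_succ]

theorem pathWeight_eq_prod_range (n : ℕ) (x : ℕ → S) :
    pathWeight P (x 0) (fun i : Fin n => x (i + 1)) = ∏ i ∈ range n, P (x i) (x (i + 1)) := by
  rw [pathWeight, prod_range]
  refine prod_congr rfl fun i _ => ?_
  congr 1
  obtain ⟨_ | i, hi⟩ := i <;> rfl

theorem pathWeight_rev_eq_prod_range (n : ℕ) (x : ℕ → S) :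
    pathWeight P (x n) (fun i : Fin n => x i.rev) = ∏ i ∈ range n, P (x (i + 1)) (x i) := by
  have h := pathWeight_eq_prod_range (P := P) n fun i => x (n - i)
  simp only [Nat.sub_zero, ← Fin.val_rev] at h
  rw [h, ← prod_range_reflect]
  refine prod_congr rfl fun i hi => ?_
  have := mem_range.1 hi
  congr 2 <;> omega

theorem tsum_pathWeight (hP : ∀ x, ∑' y, P x y = 1) (n : ℕ) (s : S) :
    ∑' y : Fin n → S, pathWeight P s y = 1 := by
  induction n generalizing s with
  | zero => simp [pathWeight]
  | succ n ih =>
    rw [← (Fin.consEquiv fun _ => S).tsum_eq, ENNReal.tsum_prod']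
    simp only [Fin.consEquiv, Equiv.coe_fn_mk, pathWeight_cons, ENNReal.tsum_mul_left, ih, mul_one,
      hP]

/-- The probability that the first `n` steps of the chain with transition matrix `P` started at `s`
form a path in `A`. -/
noncomputable def pathProb (P : S → S → ℝ≥0∞) {n : ℕ} (s : S) (A : Set (Fin n → S)) : ℝ≥0∞ :=
  ∑' y : A, pathWeight P s y.1

theorem pathProb_univ (hP : ∀ x, ∑' y, P x y = 1) (n : ℕ) (s : S) :
    pathProb P s (Set.univ : Set (Fin n → S)) = 1 := by
  rw [pathProb, tsum_univ, tsum_pathWeight hP]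

theorem mul_prod_range_eq_of_detailed_balance {π : S → ℝ≥0∞}
    (hdb : ∀ x y, π x * P x y = π y * P y x) (n : ℕ) (x : ℕ → S) :
    π (x 0) * ∏ i ∈ range n, P (x i) (x (i + 1)) =
      π (x n) * ∏ i ∈ range n, P (x (i + 1)) (x i) := by
  induction n with
  | zero => simp
  | succ n ih =>
    rw [prod_range_succ, prod_range_succ, ← mul_assoc, ih, mul_right_comm, hdb, mul_right_comm,
      mul_assoc]

end PathWeight

section TwoSided

variable {Ω S : Type*}

/-- The states of `X` before time `j` in reversed order: `X (j - 1), ..., X 0`. -/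
def past (X : ℕ → Ω → S) (j : ℕ) (a : Ω) : Fin j → S := fun i => X i.rev a

/-- The `m` states of `X` following time `j`: `X (j + 1), ..., X (j + m)`. -/
def future (X : ℕ → Ω → S) (j m : ℕ) (a : Ω) : Fin m → S := fun i => X (j + (i + 1)) a

theorem exists_path_eq (j m : ℕ) (s : S) (y : Fin j → S) (z : Fin m → S) :
    ∃ x : ℕ → S, x j = s ∧ (fun i : Fin j => x i.rev) = y ∧
      (fun i : Fin m => x (j + (i + 1))) = z := by
  let time : Fin j ⊕ Fin m → ℕ := Sum.elim (fun i => i.rev) fun i => j + (i + 1)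
  have time_injective : time.Injective := by
    rintro (i | i) (i' | i') h <;> simp only [time, Sum.elim_inl, Sum.elim_inr, Fin.val_rev] at h
      <;> grind
  have time_ne (i) : time i ≠ j := by
    rcases i with i | i <;> simp only [time, Sum.elim_inl, Sum.elim_inr] <;> omega
  refine ⟨Function.extend time (Sum.elim y z) fun _ => s, ?_, ?_, ?_⟩
  · exact Function.extend_apply' _ _ _ fun ⟨i, hi⟩ => time_ne i hi
  · exact funext fun i => time_injective.extend_apply _ _ (Sum.inl i)
  · exact funext fun i => time_injective.extend_apply _ _ (Sum.inr i)

theorem forall_le_add_iff_past_future (X : ℕ → Ω → S) (j m : ℕ) (x : ℕ → S) (a : Ω) :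
    (∀ i ≤ j + m, X i a = x i) ↔ X j a = x j ∧ past X j a = (fun i : Fin j => x i.rev) ∧
      future X j m a = (fun i : Fin m => x (j + (i + 1))) := by
  simp only [past, future, funext_iff]
  refine ⟨fun h => ⟨h _ (by omega), fun i => h _ (by omega), fun i => h _ (by omega)⟩, ?_⟩
  rintro ⟨present, before, after⟩ i hi
  rcases lt_trichotomy i j with hij | rfl | hij
  · simpa using before (Fin.rev ⟨i, hij⟩)
  · exact present
  · obtain ⟨d, rfl⟩ := Nat.exists_eq_add_of_lt hij
    exact after ⟨d, by omega⟩

/-- Paths on which at most `ℓ` states have a label not exceeding that of `σ`. -/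
def smallPaths (ω : S → ℝ) (σ : S) (ℓ n : ℕ) : Set (Fin n → S) := {y | #{i | ω (y i) ≤ ω σ} ≤ ℓ}

theorem isSmallAt_of_past_future {X : ℕ → Ω → S} {ω : S → ℝ} {j m ℓ ℓ' : ℕ} {a : Ω}
    (hpast : past X j a ∈ smallPaths ω (X j a) ℓ j)
    (hfuture : future X j m a ∈ smallPaths ω (X j a) ℓ' m) :
    IsSmallAt X ω j (ℓ + ℓ') (j + m) a :=
  (card_filter_ne_range j m fun i => ω (X i a) ≤ ω (X j a)).trans_le (add_le_add hpast hfuture)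

theorem isSmallAt_zero_iff {X : ℕ → Ω → S} {ω : S → ℝ} {ℓ n : ℕ} {a : Ω} :
    IsSmallAt X ω 0 ℓ n a ↔ future X 0 n a ∈ smallPaths ω (X 0 a) ℓ n := by
  have h := card_filter_ne_range 0 n fun i => ω (X i a) ≤ ω (X 0 a)
  simp only [univ_eq_empty, filter_empty, card_empty, zero_add] at h
  simp only [IsSmallAt, h, future, smallPaths, Set.mem_ofPred_eq, zero_add]

theorem rho_zero_antitone [MeasurableSpace Ω] (μ : Measure Ω) (X : ℕ → Ω → S) (ω : S → ℝ) (ℓ : ℕ)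
    (σ : S) : Antitone fun k => rho μ X ω 0 ℓ k σ := by
  intro k k' hk
  refine ENNReal.div_le_div_right (measure_mono ?_) _
  rintro a ⟨hσ, hsmall⟩
  refine ⟨hσ, (card_le_card ?_).trans hsmall⟩
  gcongr

end TwoSided

/-- `X` is, under `μ`, the Markov chain with initial distribution `π` and transition matrix `P`, and
`π` is reversible for `P`. Reversibility is encoded by detailed balance, which is the equality of
the laws of `(X 0, X 1)` and `(X 1, X 0)`. -/
structure IsReversibleMarkovChain {Ω S : Type*} [MeasurableSpace Ω] (μ : Measure Ω)
    (X : ℕ → Ω → S) (π : S → ℝ≥0∞) (P : S → S → ℝ≥0∞) : Prop where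
  tsum_initial : ∑' x, π x = 1
  tsum_transition : ∀ x, ∑' y, P x y = 1
  measure_path : ∀ (n : ℕ) (x : ℕ → S),
    μ {a | ∀ i ≤ n, X i a = x i} = π (x 0) * ∏ i ∈ range n, P (x i) (x (i + 1))
  detailed_balance : ∀ x y, π x * P x y = π y * P y x

namespace IsReversibleMarkovChain

variable {Ω S : Type*} [MeasurableSpace Ω] {μ : Measure Ω} {X : ℕ → Ω → S} {π : S → ℝ≥0∞}
  {P : S → S → ℝ≥0∞}

theorem initial_ne_top (h : IsReversibleMarkovChain μ X π P) (σ : S) : π σ ≠ ∞ :=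
  ne_top_of_le_ne_top (h.tsum_initial ▸ ENNReal.one_ne_top) (ENNReal.le_tsum σ)

theorem measure_past_future_singleton (h : IsReversibleMarkovChain μ X π P) (j m : ℕ)
    (s : S) (y : Fin j → S) (z : Fin m → S) :
    μ {a | X j a = s ∧ past X j a = y ∧ future X j m a = z} =
      π s * (pathWeight P s y * pathWeight P s z) := by
  obtain ⟨x, rfl, rfl, rfl⟩ := exists_path_eq j m s y z
  have hfuture := pathWeight_eq_prod_range (P := P) m fun i => x (j + i)
  simp_rw [← forall_le_add_iff_past_future]
  rw [h.measure_path, prod_range_add, ← mul_assoc,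
    mul_prod_range_eq_of_detailed_balance h.detailed_balance, mul_assoc,
    pathWeight_rev_eq_prod_range]
  exact congrArg _ (congrArg _ hfuture.symm)

variable [Countable S] [IsProbabilityMeasure μ]

theorem measure_past_future (h : IsReversibleMarkovChain μ X π P) (j m : ℕ) (σ : S)
    (A : Set (Fin j → S)) (B : Set (Fin m → S)) :
    μ {a | X j a = σ ∧ past X j a ∈ A ∧ future X j m a ∈ B} =
      π σ * (pathProb P σ A * pathProb P σ B) := by
  let f : Ω → S × (Fin j → S) × (Fin m → S) := fun a => (X j a, past X j a, future X j m a)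
  have atom (t) : μ (f ⁻¹' {t}) = π t.1 * (pathWeight P t.1 t.2.1 * pathWeight P t.1 t.2.2) := by
    rw [← h.measure_past_future_singleton]
    simp only [f, Set.preimage, Set.mem_singleton_iff, Prod.ext_iff]
  have total : ∑' t, μ (f ⁻¹' {t}) = 1 := by
    simp only [atom, ENNReal.tsum_prod', ENNReal.tsum_mul_left, tsum_pathWeight h.tsum_transition,
      mul_one, h.tsum_initial]
  calc μ (f ⁻¹' ({σ} ×ˢ A ×ˢ B))
      = ∑' t : ↑({σ} ×ˢ A ×ˢ B), μ (f ⁻¹' {(t : S × (Fin j → S) × (Fin m → S))}) :=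
        measure_preimage_eq_tsum (total.trans measure_univ.symm).le _
    _ = ∑' t : ↑(A ×ˢ B), π σ * (pathWeight P σ t.1.1 * pathWeight P σ t.1.2) := by
        rw [tsum_setProd_singleton_left σ (A ×ˢ B) fun t => μ (f ⁻¹' {t})]
        simp only [atom]
    _ = π σ * (pathProb P σ A * pathProb P σ B) := by
        rw [ENNReal.tsum_mul_left, tsum_setProd_mul, pathProb, pathProb]

theorem measure_state_eq (h : IsReversibleMarkovChain μ X π P) (j : ℕ) (σ : S) :
    μ {a | X j a = σ} = π σ := by
  simpa [pathProb_univ h.tsum_transition] using h.measure_past_future j 0 σ Set.univ Set.univ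

theorem rho_zero_eq (h : IsReversibleMarkovChain μ X π P) (ω : S → ℝ) (ℓ n : ℕ) {σ : S}
    (hσ : π σ ≠ 0) :
    rho μ X ω 0 ℓ n σ = pathProb P σ (smallPaths ω σ ℓ n) := by
  have event : {a | X 0 a = σ ∧ IsSmallAt X ω 0 ℓ n a} =
      {a | X 0 a = σ ∧ past X 0 a ∈ Set.univ ∧ future X 0 n a ∈ smallPaths ω σ ℓ n} := by
    ext a
    simp +contextual [isSmallAt_zero_iff]
  rw [rho, event, h.measure_past_future, h.measure_state_eq,
    pathProb_univ h.tsum_transition, one_mul, mul_comm,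
    ENNReal.mul_div_cancel_right hσ (h.initial_ne_top σ)]

end IsReversibleMarkovChain

theorem rho_ge_sq_general {Ω S : Type*} [MeasurableSpace Ω] [Countable S] {μ : Measure Ω}
    [IsProbabilityMeasure μ] {X : ℕ → Ω → S} {π : S → ℝ≥0∞} {P : S → S → ℝ≥0∞}
    (h : IsReversibleMarkovChain μ X π P) (ω : S → ℝ) (j m ℓ ℓ' : ℕ) {σ : S} (hσ : π σ ≠ 0) :
    rho μ X ω 0 ℓ j σ * rho μ X ω 0 ℓ' m σ ≤ rho μ X ω j (ℓ + ℓ') (j + m) σ := by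
  rw [h.rho_zero_eq ω ℓ j hσ, h.rho_zero_eq ω ℓ' m hσ, rho, h.measure_state_eq,
    ENNReal.le_div_iff_mul_le (.inl hσ) (.inl (h.initial_ne_top σ)), mul_comm,
    ← h.measure_past_future]
  refine measure_mono ?_
  rintro a ⟨rfl, hpast, hfuture⟩
  exact ⟨rfl, isSmallAt_of_past_future hpast hfuture⟩

/-- Let `X 0, X 1, ...` be a stationary reversible Markov chain on a countable
state space `S` with reversible stationary distribution `π`, `X 0 ~ π`, and label function
`ω : S → ℝ`.  (Reversibility: for every `k`, the joint distribution of `(X 0, ..., X k)`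
equals that of `(X k, ..., X 0)`.)  Then for every `σ` with `π σ > 0`, every `ℓ`, and every
`j ≤ k`, `ρ_{j,2ℓ}^k(σ) ≥ (ρ_{0,ℓ}^k(σ))²`. -/
theorem rho_ge_sq
    {Ω S : Type*} [MeasurableSpace Ω] [Countable S]
    (μ : Measure Ω) [IsProbabilityMeasure μ]
    (X : ℕ → Ω → S) (π : S → ℝ≥0∞) (P : S → S → ℝ≥0∞) (ω : S → ℝ)
    (hπ : ∑' x, π x = 1)
    (hProw : ∀ x, ∑' y, P x y = 1)
    -- the chain is the Markov chain with initial distribution `π` and transition matrix `P`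
    (hjoint : ∀ (n : ℕ) (x : ℕ → S),
      μ {a | ∀ i ≤ n, X i a = x i} = π (x 0) * ∏ i ∈ Finset.range n, P (x i) (x (i + 1)))
    -- `π` is stationary
    (hstat : ∀ y, ∑' x, π x * P x y = π y)
    -- reversibility: `(X 0, ..., X k)` and `(X k, ..., X 0)` have the same joint distribution
    (hrev : ∀ (n : ℕ) (x : ℕ → S),
      μ {a | ∀ i ≤ n, X i a = x i} = μ {a | ∀ i ≤ n, X i a = x (n - i)})
    (j ℓ k : ℕ) (hjk : j ≤ k) (σ : S) (hσ : 0 < π σ) :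
    (rho μ X ω 0 ℓ k σ) ^ 2 ≤ rho μ X ω j (2 * ℓ) k σ := by
  have balance (x y : S) : π x * P x y = π y * P y x := by
    simpa [hjoint] using hrev 1 fun i => if i = 0 then x else y
  have chain : IsReversibleMarkovChain μ X π P := ⟨hπ, hProw, hjoint, balance⟩
  have antitone := rho_zero_antitone μ X ω ℓ σ
  obtain ⟨m, rfl⟩ := Nat.exists_eq_add_of_le hjk
  calc rho μ X ω 0 ℓ (j + m) σ ^ 2
      = rho μ X ω 0 ℓ (j + m) σ * rho μ X ω 0 ℓ (j + m) σ := sq _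
    _ ≤ rho μ X ω 0 ℓ j σ * rho μ X ω 0 ℓ m σ :=
        mul_le_mul' (antitone le_self_add) (antitone le_add_self)
    _ ≤ rho μ X ω j (ℓ + ℓ) (j + m) σ := rho_ge_sq_general chain ω j m ℓ ℓ hσ.ne'
    _ = rho μ X ω j (2 * ℓ) (j + m) σ := by rw [two_mul]
end
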